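/- For all real numbers φ₁, φ₂, φ₃ with cos φ₂ ≠ 0 and cos φ₃ ≠ 0, one has the identity sin(2φ₂)·sin(φ₁ + φ₃ − φ₂)·tan(φ₃)/cos²(φ₂) + sin(2φ₃)·sin(φ₁ + φ₂ − φ₃)·tan(φ₂)/cos²(φ₃) = 4·sin φ₁ · sin φ₂ · sin φ₃ · (1 + tan φ₂ · tan φ₃). (Consequently the same holds for each cyclic permutation (k,ℓ,m) of (1,2,3): the derivative of s_k = 1 + tan φ_ℓ tan φ_m along the vector field Σ_j sin(2φ_j) sin(φ_{k'}+φ_{ℓ'}−φ_j) ∂/∂φ_j equals 4 (∏ sin φ_j)·s_k.) -/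

import Mathlib

/-!
Since `sin (2 * z) / cos z ^ 2 = 2 * tan z`, the two summands share the factor
`2 * tan z₂ * tan z₃`. What remains is a sum of the sines of `z₁ ± (z₂ - z₃)`, which is
`2 * sin z₁ * cos (z₂ - z₃)`, and the factor `1 + tan z₂ * tan z₃` comes from
`cos (z₂ - z₃)` by the subtraction formula.
-/

section

open Complex

theorem sin_two_mul_div_cos_sq (z : ℂ) : sin (2 * z) / cos z ^ 2 = 2 * tan z := by
  rw [sin_two_mul, tan_eq_sin_div_cos]
  field_simp

theorem cos_mul_cos_mul_one_add_tan_mul_tan {z w : ℂ} (hz : cos z ≠ 0) (hw : cos w ≠ 0) :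
    cos z * cos w * (1 + tan z * tan w) = cos (z - w) := by
  rw [cos_sub, ← tan_mul_cos hz, ← tan_mul_cos hw]
  ring

theorem stmt_6_general (z₁ z₂ z₃ : ℂ) (h₂ : cos z₂ ≠ 0) (h₃ : cos z₃ ≠ 0) :
    sin (2 * z₂) * sin (z₁ + z₃ - z₂) * tan z₃ / cos z₂ ^ 2
      + sin (2 * z₃) * sin (z₁ + z₂ - z₃) * tan z₂ / cos z₃ ^ 2
    = 4 * sin z₁ * sin z₂ * sin z₃ * (1 + tan z₂ * tan z₃) := by
  have sum_sines : sin (z₁ + z₃ - z₂) + sin (z₁ + z₂ - z₃) = 2 * sin z₁ * cos (z₂ - z₃) := by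
    rw [add_comm, sin_add_sin]
    ring_nf
  calc
    _ = sin (2 * z₂) / cos z₂ ^ 2 * tan z₃ * sin (z₁ + z₃ - z₂)
          + sin (2 * z₃) / cos z₃ ^ 2 * tan z₂ * sin (z₁ + z₂ - z₃) := by ring
    _ = 2 * tan z₂ * tan z₃ * (sin (z₁ + z₃ - z₂) + sin (z₁ + z₂ - z₃)) := by
      rw [sin_two_mul_div_cos_sq, sin_two_mul_div_cos_sq]
      ring
    _ = 4 * sin z₁ * (tan z₂ * tan z₃ * cos (z₂ - z₃)) := by
      rw [sum_sines]
      ring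
    _ = 4 * sin z₁ * (tan z₂ * cos z₂) * (tan z₃ * cos z₃) * (1 + tan z₂ * tan z₃) := by
      rw [← cos_mul_cos_mul_one_add_tan_mul_tan h₂ h₃]
      ring
    _ = 4 * sin z₁ * sin z₂ * sin z₃ * (1 + tan z₂ * tan z₃) := by
      rw [tan_mul_cos h₂, tan_mul_cos h₃]

end

/-- The trigonometric identity expressing that the derivative of
`s₁ = 1 + tan φ₂ tan φ₃` along the flow equals `4 (∏ sin φ_j) s₁`. -/
theorem stmt_6 (φ1 φ2 φ3 : ℝ) (h2 : Real.cos φ2 ≠ 0) (h3 : Real.cos φ3 ≠ 0) :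
    Real.sin (2 * φ2) * Real.sin (φ1 + φ3 - φ2) * Real.tan φ3 / (Real.cos φ2) ^ 2
      + Real.sin (2 * φ3) * Real.sin (φ1 + φ2 - φ3) * Real.tan φ2 / (Real.cos φ3) ^ 2
    = 4 * Real.sin φ1 * Real.sin φ2 * Real.sin φ3 *
        (1 + Real.tan φ2 * Real.tan φ3) := by
  exact_mod_cast stmt_6_general φ1 φ2 φ3 (by exact_mod_cast h2) (by exact_mod_cast h3)
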